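/- Let A be an abelian category of finite global dimension. Then every acyclic cochain complex in A is absolutely acyclic; equivalently, the canonical functor from the absolute derived category D^abs(A) to the derived category D(A) is an equivalence. -/

import Mathlib

open CategoryTheory CategoryTheory.Limits CategoryTheory.Pretriangulated

variable {A : Type u} [Category.{v} A] [Abelian A]

/-- The totalization of a (short exact) sequence of complexes `K ⟶ L ⟶ M`, realized
(up to isomorphism in the homotopy category) as a shifted mapping cone of the canonical
map `Cone(f) ⟶ M`. -/
noncomputable def totSES {K L M : CochainComplex A ℤ} (f : K ⟶ L) (g : L ⟶ M)
    (hfg : f ≫ g = 0) : CochainComplex A ℤ :=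
  (CochainComplex.mappingCone
    (CochainComplex.mappingCone.desc f 0 g (by simp [hfg])))⟦(-1 : ℤ)⟧

/-- A class of objects of the homotopy category which contains the totalizations of all
degreewise short exact sequences of complexes and is thick: closed under isomorphisms,
zero objects, shifts, extensions (cones) and direct summands. -/
structure TotClosed (P : HomotopyCategory A (ComplexShape.up ℤ) → Prop) : Prop where
  tot : ∀ {K L M : CochainComplex A ℤ} (f : K ⟶ L) (g : L ⟶ M) (hfg : f ≫ g = 0),
    (ShortComplex.mk f g hfg).ShortExact →
    P ((HomotopyCategory.quotient A (ComplexShape.up ℤ)).obj (totSES f g hfg))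
  zero : ∀ (X : HomotopyCategory A (ComplexShape.up ℤ)), IsZero X → P X
  iso : ∀ {X Y : HomotopyCategory A (ComplexShape.up ℤ)}, (X ≅ Y) → P X → P Y
  shift : ∀ (X : HomotopyCategory A (ComplexShape.up ℤ)) (n : ℤ), P X → P (X⟦n⟧)
  ext₂ : ∀ (T : Triangle (HomotopyCategory A (ComplexShape.up ℤ))),
    T ∈ distinguishedTriangles → P T.obj₁ → P T.obj₃ → P T.obj₂
  smd : ∀ (X Y : HomotopyCategory A (ComplexShape.up ℤ)), P (X ⊞ Y) → P X

/-- A complex is absolutely acyclic if its image in the homotopy category belongs to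
the minimal thick subcategory containing the totalizations of short exact sequences. -/
def IsAbsolutelyAcyclic (X : HomotopyCategory A (ComplexShape.up ℤ)) : Prop :=
  ∀ P, TotClosed P → P X

open Abelian DerivedCategory in
lemma mono_opc {Y : A} (m : ℤ) (Y' : CochainComplex A ℤ)
  (s : (HomologicalComplex.single A (ComplexShape.up ℤ) m).obj Y ⟶ Y') [QuasiIso s] :
   Mono ((HomologicalComplex.singleObjXSelf (ComplexShape.up ℤ) m Y).inv ≫ s.f m ≫ Y'.pOpcycles m) := by
  have h1 : s.f m ≫ Y'.pOpcycles m = HomologicalComplex.pOpcycles _ m ≫ HomologicalComplex.opcyclesMap s m := by simp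
  let S := (HomologicalComplex.single A (ComplexShape.up ℤ) m).obj Y
  have i1 : IsIso (S.pOpcycles m) := S.isIso_pOpcycles _ m rfl (by simp [S])
  have i2 : IsIso (S.homologyι m) := S.isIso_homologyι m _ rfl (by simp [S])
  have h2 : HomologicalComplex.opcyclesMap s m = inv (S.homologyι m) ≫ HomologicalComplex.homologyMap s m ≫ Y'.homologyι m := by
    simp
  rw [h1, h2]
  change Mono (_ ≫ S.pOpcycles m ≫ _)
  infer_instance

open Abelian DerivedCategory in
lemma efface [HasExt.{w} A] {X Y : A} (n : ℕ) (α : Ext X Y (n+1)) :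
    ∃ (Q : A) (i : Y ⟶ Q), Mono i ∧ α.comp (Ext.mk₀ i) (add_zero _) = 0 := by
  let := HasDerivedCategory.standard A
  let m : ℤ := -((n:ℤ)+1)
  let e := (singleFunctors A).shiftIso (((n+1 : ℕ) : ℤ)) m 0 (by simp [m])
  let φ : Q.obj ((HomologicalComplex.single A (ComplexShape.up ℤ) 0).obj X) ⟶ Q.obj ((HomologicalComplex.single A (ComplexShape.up ℤ) m).obj Y) := α.hom ≫ e.hom.app Y
  obtain ⟨Y', g, s, hs, hφ⟩ := left_fac (X := (HomologicalComplex.single A (ComplexShape.up ℤ) 0).obj X) (Y := (HomologicalComplex.single A (ComplexShape.up ℤ) m).obj Y) φ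
  rw [isIso_Q_map_iff_quasiIso] at hs
  refine ⟨Y'.opcycles m, _, mono_opc m Y' s, ?_⟩
  set i := (HomologicalComplex.singleObjXSelf (ComplexShape.up ℤ) m Y).inv ≫ s.f m ≫ Y'.pOpcycles m
  let t : Y' ⟶ (HomologicalComplex.single A (ComplexShape.up ℤ) m).obj (Y'.opcycles m) :=
    HomologicalComplex.mkHomToSingle (Y'.pOpcycles m) (by simp)
  have h1 : g ≫ t = 0 := by
    apply HomologicalComplex.hom_ext
    intro j
    by_cases hj : j = 0
    · apply (HomologicalComplex.isZero_single_obj_X _ _ _ _ _).eq_of_tgt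
      dsimp [m]; omega
    · apply (HomologicalComplex.isZero_single_obj_X _ _ _ _ _).eq_of_src
      exact hj
  have h2 : s ≫ t = (HomologicalComplex.single A (ComplexShape.up ℤ) m).map i := by
    ext
    rw [HomologicalComplex.single_map_f_self]
    simp [t, i]
  have hz : φ ≫ Q.map ((HomologicalComplex.single A (ComplexShape.up ℤ) m).map i) = 0 := by
    have h4 : φ ≫ Q.map s = Q.map g := by rw [hφ, Category.assoc, IsIso.inv_hom_id, Category.comp_id]
    rw [← h2, Functor.map_comp, ← Category.assoc, h4, ← Functor.map_comp, h1, Functor.map_zero]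
  ext
  rw [← Ext.hom_comp_singleFunctor_map_shift, ← cancel_mono (e.hom.app _), Category.assoc]
  have h3 : (shiftFunctor (DerivedCategory A) ((n+1:ℕ):ℤ)).map ((singleFunctor A 0).map i) ≫ e.hom.app _ =
    e.hom.app Y ≫ (singleFunctor A m).map i := e.hom.naturality i
  rw [h3, Ext.zero_hom, zero_comp, ← Category.assoc]
  exact hz

/-- Absolutely acyclic objects as an object property. -/
def absP (A : Type u) [Category.{v} A] [Abelian A] :
    ObjectProperty (HomotopyCategory A (ComplexShape.up ℤ)) := fun X => IsAbsolutelyAcyclic X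

instance : (absP A).IsClosedUnderIsomorphisms where
  of_iso e h := fun P hP => hP.iso e (h P hP)

instance : (absP A).IsTriangulated where
  exists_zero := ⟨_, isZero_zero _, fun P hP => hP.zero _ (isZero_zero _)⟩
  isStableUnderShiftBy n := ⟨fun X hX P hP => hP.shift X n (hX P hP)⟩
  toIsTriangulatedClosed₂ := .mk' (fun T hT h₁ h₃ P hP => hP.ext₂ T hT (h₁ P hP) (h₃ P hP))

lemma totClosed_acyclic : TotClosed (A := A) (fun X => HomotopyCategory.subcategoryAcyclic A X) where
  tot f g hfg hS := by
    have h := CochainComplex.mappingCone.quasiIso_descShortComplex hS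
    have h' : (HomotopyCategory.quasiIso A (ComplexShape.up ℤ))
      ((HomotopyCategory.quotient A _).map (CochainComplex.mappingCone.descShortComplex (ShortComplex.mk f g hfg))) := by
      rw [HomotopyCategory.quotient_map_mem_quasiIso_iff]
      exact h
    rw [HomotopyCategory.quasiIso_eq_trW_subcategoryAcyclic] at h'
    have h'' := ((HomotopyCategory.subcategoryAcyclic A).trW_iff_of_distinguished _ (HomotopyCategory.mappingCone_triangleh_distinguished
        (CochainComplex.mappingCone.descShortComplex (ShortComplex.mk f g hfg)))).1 h'
    have h2 := (HomotopyCategory.subcategoryAcyclic A).le_shift (-1 : ℤ) _ h''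
    exact (HomotopyCategory.subcategoryAcyclic A).prop_of_iso 
      (((HomotopyCategory.quotient A (ComplexShape.up ℤ)).commShiftIso (-1 : ℤ)).symm.app _) h2
  zero X hX := ObjectProperty.prop_of_isZero _ hX
  iso e h := ObjectProperty.prop_of_iso _ e h
  shift X n h := ObjectProperty.le_shift _ n _ h
  ext₂ T hT h1 h3 := ObjectProperty.ext_of_isTriangulatedClosed₂ _ T hT h1 h3
  smd X Y h := by
    change (HomotopyCategory.homologyFunctor A (ComplexShape.up ℤ) 0).homologicalKernel _ at h
    change (HomotopyCategory.homologyFunctor A (ComplexShape.up ℤ) 0).homologicalKernel _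
    intro n
    exact (h n).of_mono ((HomotopyCategory.homologyFunctor A (ComplexShape.up ℤ) 0).map ((shiftFunctor _ n).map (biprod.inl : X ⟶ X ⊞ Y)))

lemma absP_le : absP A ≤ HomotopyCategory.subcategoryAcyclic A := fun _ hX => hX _ totClosed_acyclic

/-- The absolute derived category. -/
abbrev DAbs (A : Type u) [Category.{v} A] [Abelian A] := (absP A).trW.Localization

/-- The localization functor to the absolute derived category. -/
noncomputable abbrev LH : HomotopyCategory A (ComplexShape.up ℤ) ⥤ DAbs A := (absP A).trW.Q

/-- The functor from complexes to the absolute derived category. -/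
noncomputable abbrev LC : CochainComplex A ℤ ⥤ DAbs A := HomotopyCategory.quotient A (ComplexShape.up ℤ) ⋙ LH

lemma absP_of_isZero (X : HomotopyCategory A (ComplexShape.up ℤ)) (h : IsZero (LH.obj X)) :
    absP A X := by
  have h1 : LH.map (𝟙 X) = LH.map 0 := h.eq_of_src _ _
  rw [MorphismProperty.map_eq_iff_precomp LH (absP A).trW] at h1
  obtain ⟨Y, s, hs, hs'⟩ := h1
  simp at hs'
  subst hs'
  rw [ObjectProperty.trW_iff] at hs
  obtain ⟨Z, g, h, hT, hZ⟩ := hs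
  have hT' := rot_of_distTriang _ hT
  have hz : -(shiftFunctor (HomotopyCategory A (ComplexShape.up ℤ)) (1:ℤ)).map (0 : Y ⟶ X) = 0 := by
    rw [Functor.map_zero, neg_zero]
  obtain ⟨e, -⟩ := exists_iso_binaryBiproduct_of_distTriang _ hT' hz
  exact fun P hP => hP.smd _ _ (hP.iso e (hZ P hP))

lemma isIso_desc {K L M : CochainComplex A ℤ} (f : K ⟶ L) (g : L ⟶ M) (hfg : f ≫ g = 0)
    (hS : (ShortComplex.mk f g hfg).ShortExact) :
    IsIso (LC.map (CochainComplex.mappingCone.desc f 0 g (by simp [hfg]))) := by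
  have h1 : absP A ((HomotopyCategory.quotient A (ComplexShape.up ℤ)).obj (totSES f g hfg)) :=
    fun P hP => hP.tot f g hfg hS
  have h2 := (absP A).prop_of_iso (((HomotopyCategory.quotient A (ComplexShape.up ℤ)).commShiftIso (-1 : ℤ)).app _) h1
  have h3 := ((absP A).prop_shift_iff_of_isStableUnderShift _ _).1 h2
  apply Localization.inverts LH (absP A).trW
  exact ((absP A).trW_iff_of_distinguished _ (HomotopyCategory.mappingCone_triangleh_distinguished
        (CochainComplex.mappingCone.desc f 0 g (by simp [hfg])))).2 h3

/-- The functor from complexes to the absolute derived category. -/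
noncomputable def LA : CochainComplex A ℤ ⥤ DAbs A := LC

noncomputable instance : (LA (A := A)).CommShift ℤ := inferInstanceAs ((LC (A := A)).CommShift ℤ)

instance : (LA (A := A)).Additive := inferInstanceAs ((LC (A := A)).Additive)

lemma isIso_LA_desc {S : ShortComplex (CochainComplex A ℤ)} (hS : S.ShortExact) :
    IsIso (LA.map (CochainComplex.mappingCone.descShortComplex S)) :=
  isIso_desc S.f S.g S.zero hS

lemma LA_cone_dist {K L : CochainComplex A ℤ} (f : K ⟶ L) :
    LA.mapTriangle.obj (CochainComplex.mappingCone.triangle f) ∈ distTriang (DAbs A) := by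
  have h := LH.map_distinguished _ (HomotopyCategory.mappingCone_triangleh_distinguished f)
  refine isomorphic_distinguished _ h _ ?_
  exact (Functor.mapTriangleCompIso (HomotopyCategory.quotient A (ComplexShape.up ℤ)) (LH (A := A))).app _

/-- The third morphism of the cone triangle. -/
noncomputable def mor3 {K L : CochainComplex A ℤ} (f : K ⟶ L) :
    CochainComplex.mappingCone f ⟶ K⟦(1:ℤ)⟧ := (CochainComplex.mappingCone.triangle f).mor₃

/-- The shift isomorphism for `LA`. -/
noncomputable def sI (K : CochainComplex A ℤ) (n : ℤ) : LA.obj (K⟦n⟧) ≅ (LA.obj K)⟦n⟧ :=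
  (LA.commShiftIso n).app K

lemma sI_nat {K L : CochainComplex A ℤ} (f : K ⟶ L) (n : ℤ) :
    LA.map (f⟦n⟧') ≫ (sI L n).hom = (sI K n).hom ≫ (LA.map f)⟦n⟧' :=
  (LA.commShiftIso n).hom.naturality f

lemma mor3_nat {S₁ S₂ : ShortComplex (CochainComplex A ℤ)} (f : S₁ ⟶ S₂) :
    mor3 S₁.f ≫ f.τ₁⟦(1:ℤ)⟧' = CochainComplex.mappingCone.map S₁.f S₂.f f.τ₁ f.τ₂ f.comm₁₂.symm ≫
      mor3 S₂.f :=
  (CochainComplex.mappingCone.triangleMap S₁.f S₂.f f.τ₁ f.τ₂ f.comm₁₂.symm).comm₃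

lemma LA_cone_dist' {K L : CochainComplex A ℤ} (f : K ⟶ L) :
    Triangle.mk (LA.map f) (LA.map (CochainComplex.mappingCone.inr f))
      (LA.map (mor3 f) ≫ (sI K 1).hom) ∈ distTriang (DAbs A) := LA_cone_dist f

/-- The connecting morphism in the absolute derived category. -/
noncomputable def dl {S : ShortComplex (CochainComplex A ℤ)} (hS : S.ShortExact) :
    LA.obj S.X₃ ⟶ (LA.obj S.X₁)⟦(1 : ℤ)⟧ :=
  have := isIso_LA_desc hS
  inv (LA.map (CochainComplex.mappingCone.descShortComplex S)) ≫
    LA.map (mor3 S.f) ≫ (sI S.X₁ 1).hom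

lemma desc_dl {S : ShortComplex (CochainComplex A ℤ)} (hS : S.ShortExact) :
    LA.map (CochainComplex.mappingCone.descShortComplex S) ≫ dl hS =
    LA.map (mor3 S.f) ≫ (sI S.X₁ 1).hom := by
  have := isIso_LA_desc hS
  simp [dl]

lemma dl_naturality {S₁ S₂ : ShortComplex (CochainComplex A ℤ)} (h₁ : S₁.ShortExact)
    (h₂ : S₂.ShortExact) (f : S₁ ⟶ S₂) :
    dl h₁ ≫ (LA.map f.τ₁)⟦(1:ℤ)⟧' = LA.map f.τ₃ ≫ dl h₂ := by
  have i₁ := isIso_LA_desc h₁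
  rw [← cancel_epi (LA.map (CochainComplex.mappingCone.descShortComplex S₁)), ← Category.assoc, desc_dl,
    ← Category.assoc, ← Functor.map_comp, ← CochainComplex.mappingCone.map_descShortComplex,
    Functor.map_comp, Category.assoc, Category.assoc, desc_dl, ← sI_nat, ← Functor.map_comp_assoc,
    ← Functor.map_comp_assoc, mor3_nat]

lemma dl_dist {S : ShortComplex (CochainComplex A ℤ)} (hS : S.ShortExact) :
    Triangle.mk (LA.map S.f) (LA.map S.g) (dl hS) ∈ distTriang (DAbs A) := by
  have := isIso_LA_desc hS
  let e := asIso (LA.map (CochainComplex.mappingCone.descShortComplex S))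
  refine isomorphic_distinguished _ (LA_cone_dist' S.f) _ ?_
  refine (Triangle.isoMk (Triangle.mk (LA.map S.f) (LA.map (CochainComplex.mappingCone.inr S.f))
      (LA.map (mor3 S.f) ≫ (sI S.X₁ 1).hom)) (Triangle.mk (LA.map S.f) (LA.map S.g) (dl hS))
      (Iso.refl (LA.obj S.X₁)) (Iso.refl (LA.obj S.X₂))
    e ?_ ?_ ?_).symm
  · exact (Category.comp_id _).trans (Category.id_comp _).symm
  · refine Eq.trans ?_ (Category.id_comp _).symm
    refine (LA.map_comp _ _).symm.trans ?_
    exact congrArg LA.map (CochainComplex.mappingCone.inr_descShortComplex S)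
  · have h : (LA.map (mor3 S.f) ≫ (sI S.X₁ 1).hom) ≫ (𝟙 (LA.obj S.X₁))⟦(1:ℤ)⟧' =
      LA.map (CochainComplex.mappingCone.descShortComplex S) ≫ dl hS := by
      rw [CategoryTheory.Functor.map_id, Category.comp_id]
      exact (desc_dl hS).symm
    exact h

/-- The complex with zero differentials. -/
def zc (X : ℤ → A) : CochainComplex A ℤ where
  X := X
  d _ _ := 0
  shape _ _ _ := rfl
  d_comp_d' _ _ _ _ _ := zero_comp

/-- Morphisms of complexes with zero differentials. -/
def zmap {X Y : ℤ → A} (f : ∀ i, X i ⟶ Y i) : zc X ⟶ zc Y where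
  f := f
  comm' i j _ := by
    change f i ≫ (0 : Y i ⟶ Y j) = (0 : X i ⟶ X j) ≫ f j
    rw [comp_zero, zero_comp]

lemma zmap_comp {X Y Z : ℤ → A} (f : ∀ i, X i ⟶ Y i) (g : ∀ i, Y i ⟶ Z i) :
    zmap (fun i => f i ≫ g i) = zmap f ≫ zmap g := rfl

lemma zmap_id (X : ℤ → A) : zmap (fun i => 𝟙 (X i)) = 𝟙 (zc X) := rfl

lemma zmap_sub {X Y : ℤ → A} (f g : ∀ i, X i ⟶ Y i) :
    zmap (fun i => f i - g i) = zmap f - zmap g := rfl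

lemma zmap_zero (X Y : ℤ → A) : zmap (fun i => (0 : X i ⟶ Y i)) = 0 := rfl

lemma zmap_comp_zero {X Y Z : ℤ → A} (f : ∀ i, X i ⟶ Y i) (g : ∀ i, Y i ⟶ Z i)
    (h : ∀ i, f i ≫ g i = 0) : zmap f ≫ zmap g = 0 := by
  rw [← zmap_comp, ← zmap_zero]
  congr 1
  exact funext h

lemma zses {Y Q W : ℤ → A} {f : ∀ i, Y i ⟶ Q i} {g : ∀ i, Q i ⟶ W i} {hz : ∀ i, f i ≫ g i = 0}
    (hS : ∀ i, (ShortComplex.mk (f i) (g i) (hz i)).ShortExact) :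
    (ShortComplex.mk (zmap f) (zmap g) (zmap_comp_zero f g hz)).ShortExact :=
  HomologicalComplex.shortExact_of_degreewise_shortExact _ hS

/-- The graded object seen in the absolute derived category. -/
noncomputable def FO (X : ℤ → A) : DAbs A := LA.obj (zc X)

/-- The action of `FO` on morphisms. -/
noncomputable def FM {X Y : ℤ → A} (f : ∀ i, X i ⟶ Y i) : FO X ⟶ FO Y := LA.map (zmap f)

lemma FM_comp {X Y Z : ℤ → A} (f : ∀ i, X i ⟶ Y i) (g : ∀ i, Y i ⟶ Z i) :
    FM (fun i => f i ≫ g i) = FM f ≫ FM g := LA.map_comp (zmap f) (zmap g)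

lemma FM_id (X : ℤ → A) : FM (fun i => 𝟙 (X i)) = 𝟙 (FO X) := LA.map_id _

lemma FM_sub {X Y : ℤ → A} (f g : ∀ i, X i ⟶ Y i) :
    FM (fun i => f i - g i) = FM f - FM g := LA.map_sub (f := zmap f) (g := zmap g)

lemma FM_zero (X Y : ℤ → A) : FM (fun i => (0 : X i ⟶ Y i)) = 0 := LA.map_zero _ _

/-- The connecting morphism. -/
noncomputable def zδ {Y Q W : ℤ → A} {f : ∀ i, Y i ⟶ Q i} {g : ∀ i, Q i ⟶ W i}
    {hz : ∀ i, f i ≫ g i = 0}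
    (hS : ∀ i, (ShortComplex.mk (f i) (g i) (hz i)).ShortExact) : ShiftedHom (FO W) (FO Y) (1:ℤ) :=
  dl (zses hS)

lemma zδ_nat {Y Q W : ℤ → A} {f : ∀ i, Y i ⟶ Q i} {g : ∀ i, Q i ⟶ W i}
    {hz : ∀ i, f i ≫ g i = 0}
    (hS : ∀ i, (ShortComplex.mk (f i) (g i) (hz i)).ShortExact)
    {Y' Q' W' : ℤ → A} {f' : ∀ i, Y' i ⟶ Q' i} {g' : ∀ i, Q' i ⟶ W' i}
    {hz' : ∀ i, f' i ≫ g' i = 0}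
    (hS' : ∀ i, (ShortComplex.mk (f' i) (g' i) (hz' i)).ShortExact)
    (v : ∀ i, Y i ⟶ Y' i) (u : ∀ i, Q i ⟶ Q' i) (w : ∀ i, W i ⟶ W' i)
    (h₁ : ∀ i, v i ≫ f' i = f i ≫ u i) (h₂ : ∀ i, u i ≫ g' i = g i ≫ w i) :
    zδ hS ≫ (FM v)⟦(1:ℤ)⟧' = FM w ≫ zδ hS' :=
  dl_naturality (zses hS) (zses hS')
    { τ₁ := zmap v, τ₂ := zmap u, τ₃ := zmap w
      comm₁₂ := by
        change zmap v ≫ zmap f' = zmap f ≫ zmap u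
        rw [← zmap_comp, ← zmap_comp]; congr 1; exact funext h₁
      comm₂₃ := by
        change zmap u ≫ zmap g' = zmap g ≫ zmap w
        rw [← zmap_comp, ← zmap_comp]; congr 1; exact funext h₂ }

lemma FM_zδ {Y Q W : ℤ → A} {f : ∀ i, Y i ⟶ Q i} {g : ∀ i, Q i ⟶ W i}
    {hz : ∀ i, f i ≫ g i = 0}
    (hS : ∀ i, (ShortComplex.mk (f i) (g i) (hz i)).ShortExact) : FM g ≫ zδ hS = 0 :=
  comp_distTriang_mor_zero₂₃ _ (dl_dist (zses hS))

lemma coker_ses {Y Q : A} (f : Y ⟶ Q) [Mono f] :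
    (ShortComplex.mk f (cokernel.π f) (cokernel.condition f)).ShortExact where
  exact := ShortComplex.exact_cokernel f
  mono_f := inferInstance
  epi_g := inferInstance

lemma ses_desc {Y Q W Q' : A} {f : Y ⟶ Q} {g : Q ⟶ W} {hz : f ≫ g = 0}
    (hS : (ShortComplex.mk f g hz).ShortExact) (t : Q ⟶ Q') (ht : f ≫ t = 0) :
    ∃ w : W ⟶ Q', t = g ≫ w := by
  have := hS.epi_g
  exact ⟨hS.exact.desc t ht, (hS.exact.g_desc t ht).symm⟩

section Rel

open Abelian

variable [HasExt.{w} A]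

/-- The relation between families of Ext classes and morphisms in the absolute derived category. -/
def R : ∀ (n : ℕ) {X Y : ℤ → A} (_ : ∀ i, Ext (X i) (Y i) n)
    (_ : ShiftedHom (FO X) (FO Y) (n:ℤ)), Prop
  | 0, X, Y, α, h => ∃ f : ∀ i, X i ⟶ Y i, (∀ i, α i = Ext.mk₀ (f i)) ∧
      h = ShiftedHom.mk₀ ((0:ℕ):ℤ) Nat.cast_zero (FM f)
  | n+1, X, Y, α, h => ∃ (Q W : ℤ → A) (f : ∀ i, Y i ⟶ Q i) (g : ∀ i, Q i ⟶ W i)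
      (hz : ∀ i, f i ≫ g i = 0) (hS : ∀ i, (ShortComplex.mk (f i) (g i) (hz i)).ShortExact)
      (β : ∀ i, Ext (X i) (W i) n) (k : ShiftedHom (FO X) (FO W) (n:ℤ)),
      R n β k ∧ (∀ i, α i = (β i).comp (hS i).extClass rfl) ∧
      h = k.comp (zδ hS) (by push_cast; ring)

/-- Postcomposition -/
noncomputable def eps {n : ℕ} {X Y Y' : ℤ → A} (α : ∀ i, Ext (X i) (Y i) n) (v : ∀ i, Y i ⟶ Y' i) :
    ∀ i, Ext (X i) (Y' i) n := fun i => (α i).comp (Ext.mk₀ (v i)) (add_zero n)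

lemma R_push_core (n : ℕ) {X Y Q W : ℤ → A} {f : ∀ i, Y i ⟶ Q i} {g : ∀ i, Q i ⟶ W i}
    {hz : ∀ i, f i ≫ g i = 0}
    (hS : ∀ i, (ShortComplex.mk (f i) (g i) (hz i)).ShortExact)
    {Y' Q' W' : ℤ → A} {f' : ∀ i, Y' i ⟶ Q' i} {g' : ∀ i, Q' i ⟶ W' i}
    {hz' : ∀ i, f' i ≫ g' i = 0}
    (hS' : ∀ i, (ShortComplex.mk (f' i) (g' i) (hz' i)).ShortExact)
    (v : ∀ i, Y i ⟶ Y' i) (u : ∀ i, Q i ⟶ Q' i) (w : ∀ i, W i ⟶ W' i)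
    (h₁ : ∀ i, v i ≫ f' i = f i ≫ u i) (h₂ : ∀ i, u i ≫ g' i = g i ≫ w i)
    (β : ∀ i, Ext (X i) (W i) n) (k : ShiftedHom (FO X) (FO W) (n:ℤ)) :
    (∀ i, ((β i).comp (hS i).extClass rfl).comp (Ext.mk₀ (v i)) (add_zero (n+1)) =
      (eps β w i).comp (hS' i).extClass rfl) ∧
    ((k.comp (zδ hS) (by push_cast; ring) : ShiftedHom (FO X) (FO Y) ((n+1:ℕ):ℤ)) ≫
      (FM v)⟦((n+1:ℕ):ℤ)⟧' : ShiftedHom (FO X) (FO Y') ((n+1:ℕ):ℤ)) =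
      ShiftedHom.comp (Y := FO W') (b := (1:ℤ)) (a := (n:ℤ)) (k ≫ (FM w)⟦(n:ℤ)⟧') (zδ hS') (by push_cast; ring) := by
  constructor
  · intro i
    have h := (hS i).extClass_naturality (hS' i)
      { τ₁ := v i, τ₂ := u i, τ₃ := w i, comm₁₂ := h₁ i, comm₂₃ := h₂ i }
    dsimp only at h
    rw [Ext.comp_assoc_of_third_deg_zero, h, eps, Ext.comp_assoc_of_second_deg_zero]
  · have h := zδ_nat hS hS' v u w h₁ h₂
    rw [← ShiftedHom.comp_mk₀ _ 0 rfl, ← ShiftedHom.comp_mk₀ _ 0 rfl,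
      ShiftedHom.comp_assoc _ _ _ _ (zero_add _) (by push_cast; ring),
      ShiftedHom.comp_assoc _ _ _ _ (add_zero _) (by push_cast; ring),
      ShiftedHom.mk₀_comp, ShiftedHom.comp_mk₀, h]

lemma R_nat (n : ℕ) : ∀ {X Y Y' : ℤ → A} (α : ∀ i, Ext (X i) (Y i) n)
    (h : ShiftedHom (FO X) (FO Y) (n:ℤ)) (v : ∀ i, Y i ⟶ Y' i), R n α h →
    R n (eps α v) (h ≫ (FM v)⟦(n:ℤ)⟧') := by
  induction n with
  | zero =>
    rintro X Y Y' α h v ⟨f, hf, rfl⟩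
    refine ⟨fun i => f i ≫ v i, fun i => ?_, ?_⟩
    · rw [eps, hf, Ext.mk₀_comp_mk₀]
    · rw [FM_comp, ← ShiftedHom.comp_mk₀ _ 0 rfl, ShiftedHom.mk₀_comp_mk₀]
  | succ n ih =>
    rintro X Y Y' α h v ⟨Q, W, f, g, hz, hS, β, k, hR, hα, rfl⟩
    have (i : ℤ) : Mono (f i) := (hS i).mono_f
    let f' : ∀ i, Y' i ⟶ pushout (f i) (v i) := fun i => pushout.inr (f i) (v i)
    let u : ∀ i, Q i ⟶ pushout (f i) (v i) := fun i => pushout.inl (f i) (v i)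
    have hu (i : ℤ) : v i ≫ f' i = f i ≫ u i := pushout.condition.symm
    have (i : ℤ) : Mono (f' i) := by dsimp [f']; infer_instance
    choose w hw using fun i => ses_desc (hS i) (u i ≫ cokernel.π (f' i)) (by
      rw [← Category.assoc, ← hu, Category.assoc, cokernel.condition, comp_zero])
    obtain ⟨c₁, c₂⟩ := R_push_core n hS (fun i => coker_ses (f' i)) v u w hu hw β k
    refine ⟨_, _, f', fun i => cokernel.π (f' i), _, fun i => coker_ses (f' i), eps β w, _,
      ih β k w hR, fun i => ?_, c₂⟩
    rw [← c₁, eps, hα]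

lemma R_sub (n : ℕ) {X Y : ℤ → A} (α α' : ∀ i, Ext (X i) (Y i) n)
    (h h' : ShiftedHom (FO X) (FO Y) (n:ℤ)) (hR : R n α h) (hR' : R n α' h') :
    R n (fun i => α i - α' i) (h - h') := by
  induction n generalizing X Y with
  | zero =>
    obtain ⟨f, hf, rfl⟩ := hR
    obtain ⟨f', hf', rfl⟩ := hR'
    refine ⟨fun i => f i - f' i, fun i => ?_, ?_⟩
    · beta_reduce
      rw [hf, hf']
      exact (map_sub Ext.addEquiv₀.symm (f i) (f' i)).symm
    · rw [FM_sub, sub_eq_add_neg, sub_eq_add_neg, ShiftedHom.mk₀_add, ShiftedHom.mk₀_neg]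
  | succ n ih =>
    obtain ⟨Q, W, f, g, hz, hS, β, k, hR, hα, rfl⟩ := hR
    obtain ⟨Q', W', f', g', hz', hS', β', k', hR', hα', rfl⟩ := hR'
    have (i : ℤ) : Mono (f i) := (hS i).mono_f
    have (i : ℤ) : Mono (f' i) := (hS' i).mono_f
    let u : ∀ i, Q i ⟶ pushout (f i) (f' i) := fun i => pushout.inl (f i) (f' i)
    let u' : ∀ i, Q' i ⟶ pushout (f i) (f' i) := fun i => pushout.inr (f i) (f' i)
    let f2 : ∀ i, Y i ⟶ pushout (f i) (f' i) := fun i => f i ≫ u i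
    have hu (i : ℤ) : 𝟙 _ ≫ f2 i = f i ≫ u i := Category.id_comp _
    have hu' (i : ℤ) : 𝟙 _ ≫ f2 i = f' i ≫ u' i := (Category.id_comp _).trans pushout.condition
    have (i : ℤ) : Mono (u i) := by dsimp [u]; infer_instance
    have (i : ℤ) : Mono (f2 i) := mono_comp _ _
    choose w hw using fun i => ses_desc (hS i) (u i ≫ cokernel.π (f2 i)) (by
      rw [← Category.assoc, ← hu, Category.assoc, cokernel.condition, comp_zero])
    choose w' hw' using fun i => ses_desc (hS' i) (u' i ≫ cokernel.π (f2 i)) (by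
      rw [← Category.assoc, ← hu', Category.assoc, cokernel.condition, comp_zero])
    obtain ⟨c₁, c₂⟩ := R_push_core n hS (fun i => coker_ses (f2 i)) _ u w hu hw β k
    obtain ⟨c₁', c₂'⟩ := R_push_core n hS' (fun i => coker_ses (f2 i)) _ u' w' hu' hw' β' k'
    rw [FM_id, CategoryTheory.Functor.map_id, Category.comp_id] at c₂ c₂'
    refine ⟨_, _, f2, fun i => cokernel.π (f2 i), _, fun i => coker_ses (f2 i), _, _,
      ih (eps β w) (eps β' w') _ _ (R_nat n β k w hR) (R_nat n β' k' w' hR'), fun i => ?_, ?_⟩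
    · have d := c₁ i
      have d' := c₁' i
      rw [Ext.comp_mk₀_id] at d d'
      beta_reduce
      rw [hα, hα', d, d', sub_eq_add_neg, sub_eq_add_neg, Ext.add_comp, Ext.neg_comp]
    · rw [sub_eq_add_neg, sub_eq_add_neg, ShiftedHom.add_comp, ShiftedHom.neg_comp]
      exact congrArg₂ (fun a b => a + -b) c₂ c₂'

lemma R_total (n : ℕ) {X Y : ℤ → A} (α : ∀ i, Ext (X i) (Y i) n) : ∃ h, R n α h := by
  induction n generalizing X Y with
  | zero =>
    exact ⟨_, fun i => Ext.addEquiv₀ (α i), fun i => (Ext.addEquiv₀.symm_apply_apply (α i)).symm, rfl⟩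
  | succ n ih =>
    choose Q f hf hα using fun i => efface n (α i)
    choose β hβ using fun i => Ext.covariant_sequence_exact₁ _ (coker_ses (f i)) (α i) (hα i) rfl
    obtain ⟨k, hk⟩ := ih β
    exact ⟨_, Q, _, f, fun i => cokernel.π (f i), _, fun i => coker_ses (f i), β, k, hk,
      fun i => (hβ i).symm, rfl⟩

lemma R_zero (n : ℕ) {X Y : ℤ → A} (α : ∀ i, Ext (X i) (Y i) n) (hα : ∀ i, α i = 0)
    (h : ShiftedHom (FO X) (FO Y) (n:ℤ)) (hR : R n α h) : h = 0 := by
  induction n generalizing X Y with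
  | zero =>
    obtain ⟨f, hf, rfl⟩ := hR
    have : f = fun i => 0 := funext fun i => by
      have := hf i
      rw [hα] at this
      exact (Ext.mk₀_eq_zero_iff _).1 this.symm
    rw [this, FM_zero, ShiftedHom.mk₀_zero]
  | succ n ih =>
    obtain ⟨Q, W, f, g, hz, hS, β, k, hR, hα', rfl⟩ := hR
    choose γ hγ using fun i => Ext.covariant_sequence_exact₃ _ (hS i) (β i) rfl
      ((hα' i).symm.trans (hα i))
    obtain ⟨l, hl⟩ := R_total n γ
    have h1 := R_sub n _ _ _ _ hR (R_nat n γ l g hl)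
    have h2 := ih _ (fun i => by rw [← hγ i]; exact sub_self _) _ h1
    rw [sub_eq_zero.1 h2, ← ShiftedHom.comp_mk₀ _ 0 rfl,
      ShiftedHom.comp_assoc _ _ _ _ (add_zero _) (by push_cast; ring),
      ShiftedHom.mk₀_comp, FM_zδ, ShiftedHom.comp_zero]

end Rel

/-- Splitting data of an acyclic complex into short exact sequences. -/
structure AD (C : CochainComplex A ℤ) where
  V : ℤ → A
  ι : ∀ i, V i ⟶ C.X (i+1)
  π : ∀ i, C.X i ⟶ V i
  fac : ∀ i, π i ≫ ι i = C.d i (i+1)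
  zero : ∀ i, ι i ≫ π (i+1) = 0
  se : ∀ i, (ShortComplex.mk (ι i) (π (i+1)) (zero i)).ShortExact

lemma ses_neg {Y Q W : A} {f : Y ⟶ Q} {g : Q ⟶ W} {hz : f ≫ g = 0} (hz' : (-f) ≫ g = 0)
    (hS : (ShortComplex.mk f g hz).ShortExact) : (ShortComplex.mk (-f) g hz').ShortExact := by
  let e : ShortComplex.mk f g hz ≅ ShortComplex.mk (-f) g hz' :=
    ShortComplex.isoMk (-(Iso.refl Y)) (Iso.refl Q) (Iso.refl W) (by simp) (by simp)
  exact ShortComplex.shortExact_of_iso e hS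

/-- Shifted data. -/
def AD.sh {C : CochainComplex A ℤ} (D : AD C) : AD (C⟦(1:ℤ)⟧) where
  V i := D.V (i+1)
  ι i := (-(D.ι (i+1)) : D.V (i+1) ⟶ C.X (i+1+1))
  π i := (D.π (i+1) : C.X (i+1) ⟶ D.V (i+1))
  fac i := by
    have h : (C⟦(1:ℤ)⟧).d i (i+1) = -C.d (i+1) (i+1+1) := by
      rw [CochainComplex.shiftFunctor_obj_d']
      simp
    have h2 : D.π (i+1) ≫ (-(D.ι (i+1))) = -C.d (i+1) (i+1+1) := by
      rw [Preadditive.comp_neg, D.fac]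
    exact h2.trans h.symm
  zero i := by
    have h : (-(D.ι (i+1))) ≫ D.π (i+1+1) = 0 := by
      rw [Preadditive.neg_comp, D.zero, neg_zero]
    exact h
  se i := ses_neg _ (D.se (i+1))

/-- The projection -/
def AD.p {C : CochainComplex A ℤ} (D : AD C) : C ⟶ zc D.V where
  f := D.π
  comm' i j hij := by
    obtain rfl : i + 1 = j := hij
    change D.π i ≫ (0 : D.V i ⟶ D.V (i+1)) = C.d i (i+1) ≫ D.π (i+1)
    rw [← D.fac, Category.assoc, D.zero, comp_zero]

lemma AD.zero' {C : CochainComplex A ℤ} (D : AD C) (i : ℤ) : (-(D.ι i)) ≫ D.π (i+1) = 0 := by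
  rw [Preadditive.neg_comp, D.zero, neg_zero]

lemma AD.se' {C : CochainComplex A ℤ} (D : AD C) (i : ℤ) :
    (ShortComplex.mk (-(D.ι i)) (D.π (i+1)) (D.zero' i)).ShortExact := ses_neg _ (D.se i)

section Lift

open CochainComplex CochainComplex.HomComplex

/-- the cochain of degree one given by `π` -/
def AD.co {C : CochainComplex A ℤ} (D : AD C) : Cochain (C⟦(1:ℤ)⟧) (zc D.V) 1 :=
  Cochain.mk (fun i j hij => (C.shiftFunctorObjXIso 1 i j hij.symm).hom ≫ D.π j)

/-- the cochain of degree zero given by identities -/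
def AD.co0 {C : CochainComplex A ℤ} (D : AD C) : Cochain (C⟦(1:ℤ)⟧) (zc (fun i => C.X (i+1))) 0 :=
  Cochain.ofHoms (fun i => (𝟙 (C.X (i+1)) : (C⟦(1:ℤ)⟧).X i ⟶ (zc (fun i => C.X (i+1))).X i))

lemma zc_d (X : ℤ → A) (i j : ℤ) : (zc X).d i j = 0 := rfl

lemma AD.co_cocycle {C : CochainComplex A ℤ} (D : AD C) : δ 1 2 D.co = 0 := by
  ext i j hij
  rw [δ_v 1 2 rfl D.co i j hij (i+1) (i+1) (by omega) (by omega), zc_d]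
  obtain rfl : i + 1 + 1 = j := by omega
  have h : (C⟦(1:ℤ)⟧).d i (i+1) ≫ D.co.v (i+1) (i+1+1) (by omega) = 0 := by
    have h1 : D.co.v (i+1) (i+1+1) (by omega) = D.π (i+1+1) := Category.id_comp _
    have h4 : (C⟦(1:ℤ)⟧).d i (i+1) = (D.π (i+1) ≫ (-(D.ι (i+1))) : C.X (i+1) ⟶ C.X (i+1+1)) :=
      (D.sh.fac i).symm
    have h5 : (D.π (i+1) ≫ (-(D.ι (i+1)))) ≫ D.π (i+1+1) = 0 := by
      rw [Category.assoc, D.zero', comp_zero]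
    exact (congrArg₂ (fun (a : C.X (i+1) ⟶ C.X (i+1+1)) (b : C.X (i+1+1) ⟶ D.V (i+1+1)) => a ≫ b)
      h4 h1).trans h5
  have h3 : D.co.v i (i+1) rfl ≫ (0 : (zc D.V).X (i+1) ⟶ (zc D.V).X (i+1+1)) = 0 := comp_zero
  rw [h, smul_zero, add_zero]
  exact h3

lemma li_aux {X Y Z W : A} (d : X ⟶ Y) (c0 : Y ⟶ Z) (c : X ⟶ W) (f : W ⟶ Z) (z : X ⟶ Z)
    (hz : z = 0) (h : d ≫ c0 = c ≫ f) : z + Int.negOnePow (0+1) • d ≫ c0 + c ≫ f = 0 := by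
  rw [hz, h]; simp

lemma AD.li_eq {C : CochainComplex A ℤ} (D : AD C) :
    δ 0 1 D.co0 + (Cocycle.mk D.co 2 rfl D.co_cocycle).1.comp
      (Cochain.ofHom (zmap (fun i => -(D.ι i)))) (add_zero 1) = 0 := by
    ext i j hij
    obtain rfl : i + 1 = j := by omega
    rw [Cochain.add_v, δ_v 0 1 rfl D.co0 i (i+1) hij i (i+1) (by omega) (by omega), zc_d]
    have h0 : D.co0.v (i+1) (i+1) (add_zero _) = 𝟙 _ := Cochain.ofHoms_v _ _
    have h1 : D.co.v i (i+1) rfl = D.π (i+1) := Category.id_comp _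
    have h4 : (C⟦(1:ℤ)⟧).d i (i+1) = (D.π (i+1) ≫ (-(D.ι (i+1))) : C.X (i+1) ⟶ C.X (i+1+1)) :=
      (D.sh.fac i).symm
    rw [Cochain.comp_v _ _ (add_zero 1) i (i+1) (i+1) rfl (by omega), Cochain.ofHom_v]
    refine li_aux (X := C.X (i+1)) (Y := C.X (i+1+1)) (Z := C.X (i+1+1)) (W := D.V (i+1)) _ _ _ _ _
      comp_zero ?_
    refine (congrArg₂ (fun (a : C.X (i+1) ⟶ C.X (i+1+1)) (b : C.X (i+1+1) ⟶ C.X (i+1+1)) => a ≫ b)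
      h4 h0).trans (Eq.trans (Category.comp_id _) ?_)
    exact congrArg (fun (a : C.X (i+1) ⟶ D.V (i+1)) => a ≫ (-(D.ι (i+1)))) h1.symm

/-- The lift of `C⟦1⟧` to the mapping cone. -/
noncomputable def AD.li {C : CochainComplex A ℤ} (D : AD C) :
    C⟦(1:ℤ)⟧ ⟶ mappingCone (zmap (fun i => -(D.ι i))) :=
  mappingCone.lift _ (Cocycle.mk D.co 2 rfl D.co_cocycle) D.co0 D.li_eq

lemma AD.co0_v {C : CochainComplex A ℤ} (D : AD C) (i : ℤ) :
    D.co0.v i i (add_zero _) = 𝟙 (C.X (i+1)) := Cochain.ofHoms_v _ _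

lemma AD.co_v {C : CochainComplex A ℤ} (D : AD C) (i : ℤ) :
    D.co.v i (i+1) rfl = D.π (i+1) := Category.id_comp _

lemma AD.li_desc {C : CochainComplex A ℤ} (D : AD C) :
    D.li ≫ mappingCone.descShortComplex (ShortComplex.mk _ _ (zmap_comp_zero _ _ D.zero')) = D.sh.p := by
  apply HomologicalComplex.hom_ext
  intro i
  rw [HomologicalComplex.comp_f]
  refine (mappingCone.lift_desc_f _ _ _ _ _ _ _ i (i+1) rfl).trans ?_
  rw [Cochain.zero_v, comp_zero, zero_add]
  exact (congrArg (fun (a : C.X (i+1) ⟶ C.X (i+1)) => a ≫ D.π (i+1)) (D.co0_v i)).trans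
    (Category.id_comp _)

lemma mor3_aux {X M V W : A} (l : X ⟶ M) (a : X ⟶ V) (b : X ⟶ W) (il : V ⟶ M) (ir : W ⟶ M)
    (m : M ⟶ V) (h : l = a ≫ il + b ≫ ir) (hl : il ≫ m = -𝟙 V) (hr : ir ≫ m = 0) : l ≫ m = -a := by
  rw [h, Preadditive.add_comp, Category.assoc, Category.assoc, hl, hr]
  simp

lemma AD.li_mor3 {C : CochainComplex A ℤ} (D : AD C) :
    D.li ≫ mor3 _ = -(D.p⟦(1:ℤ)⟧') := by
  apply HomologicalComplex.hom_ext
  intro i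
  rw [HomologicalComplex.comp_f]
  have h := mor3_aux (V := D.V (i+1)) _ _ _ _ _ ((mor3 (zmap (fun i => -(D.ι i)))).f i)
    (mappingCone.lift_f _ (Cocycle.mk D.co 2 rfl D.co_cocycle) D.co0 D.li_eq i (i+1) rfl)
    (mappingCone.inl_v_triangle_mor₃_f _ (i+1) i (by omega))
    (mappingCone.inr_f_triangle_mor₃_f _ i)
  refine h.trans ?_
  exact congrArg (fun (a : C.X (i+1) ⟶ D.V (i+1)) => -a) (D.co_v i)

/-- `p` in the absolute derived category -/
noncomputable def AD.pA {C : CochainComplex A ℤ} (D : AD C) : LA.obj C ⟶ FO D.V := LA.map D.p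

lemma key_aux {T : Type*} [Category T] [Preadditive T] {X Y Z W U : T} (a : X ⟶ Y) (l : X ⟶ Z)
    (d : Z ⟶ Y) (e : Y ⟶ W) (m : Z ⟶ U) (s : U ⟶ W) (q : X ⟶ U) (r : X ⟶ W)
    (h₁ : a = l ≫ d) (h₂ : d ≫ e = m ≫ s) (h₃ : l ≫ m = -q) (h₄ : q ≫ s = r) : a ≫ e = -r := by
  rw [h₁, Category.assoc, h₂, ← Category.assoc, h₃, Preadditive.neg_comp, h₄]

lemma AD.key {C : CochainComplex A ℤ} (D : AD C) :
    D.sh.pA ≫ zδ D.se' = -((sI C 1).hom ≫ D.pA⟦(1:ℤ)⟧') := by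
  have h1 := desc_dl (zses D.se')
  have h2 : D.sh.pA = LA.map D.li ≫ LA.map (mappingCone.descShortComplex
      (ShortComplex.mk _ _ (zmap_comp_zero _ _ D.zero'))) := by
    rw [← Functor.map_comp, D.li_desc]; rfl
  have h3 : LA.map D.li ≫ LA.map (mor3 _) = -LA.map (D.p⟦(1:ℤ)⟧') := by
    rw [← Functor.map_comp, D.li_mor3, Functor.map_neg]
  exact key_aux _ _ _ _ _ _ _ _ h2 h1 h3 (sI_nat D.p 1)

end Lift

section Final

open Abelian

lemma S_lemma [HasExt.{w} A] (N : ℕ) : ∀ {C : CochainComplex A ℤ} (D : AD C),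
    ∃ (X : ℤ → A) (α : ∀ i, Ext (X i) (D.V i) N) (h : ShiftedHom (FO X) (FO D.V) (N:ℤ)) (T : DAbs A)
      (m : T ⟶ FO X) (c : T ⟶ (LA.obj C)⟦(N:ℤ)⟧), R N α h ∧ IsIso c ∧ c ≫ D.pA⟦(N:ℤ)⟧' = m ≫ h := by
  induction N with
  | zero =>
    intro C D
    refine ⟨D.V, fun i => Ext.mk₀ (𝟙 _), ShiftedHom.mk₀ ((0:ℕ):ℤ) Nat.cast_zero (FM (fun i => 𝟙 _)),
      LA.obj C, D.pA, ShiftedHom.mk₀ ((0:ℕ):ℤ) Nat.cast_zero (𝟙 _), ⟨_, fun _ => rfl, rfl⟩, ?_, ?_⟩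
    · unfold ShiftedHom.mk₀; infer_instance
    · rw [FM_id, ← ShiftedHom.comp_mk₀ _ 0 rfl, ← ShiftedHom.mk₀_comp 0 rfl,
        ShiftedHom.mk₀_comp_mk₀, ShiftedHom.mk₀_comp_mk₀, Category.comp_id, Category.id_comp]
  | succ n ih =>
    intro C D
    obtain ⟨X, α, h, T, m, c, hR, hc, e⟩ := ih D.sh
    let cc : T ⟶ (LA.obj C)⟦((n+1:ℕ):ℤ)⟧ := c ≫ (sI C 1).hom⟦(n:ℤ)⟧' ≫
      (shiftFunctorAdd' (DAbs A) (1:ℤ) (n:ℤ) ((n+1:ℕ):ℤ) (by push_cast; ring)).inv.app _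
    refine ⟨X, _, _, T, -m, cc, ⟨_, D.sh.V, _, _, _, D.se', α, h, hR, fun _ => rfl, rfl⟩, ?_, ?_⟩
    · dsimp only [cc]; infer_instance
    · have hk := D.key
      have h1 := (shiftFunctorAdd' (DAbs A) (1:ℤ) (n:ℤ) ((n+1:ℕ):ℤ) (by push_cast; ring)).inv.naturality D.pA
      have h2 : m ≫ h.comp (zδ D.se') (show 1 + (n:ℤ) = ((n+1:ℕ):ℤ) by push_cast; ring) =
        c ≫ (D.sh.pA ≫ zδ D.se')⟦(n:ℤ)⟧' ≫
          (shiftFunctorAdd' (DAbs A) (1:ℤ) (n:ℤ) ((n+1:ℕ):ℤ) (by push_cast; ring)).inv.app _ := by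
        rw [ShiftedHom.comp, ← Category.assoc m h, ← e, Functor.map_comp]
        simp only [Category.assoc]
      rw [Preadditive.neg_comp, h2, hk, Functor.map_neg, Preadditive.neg_comp, Preadditive.comp_neg,
        neg_neg, Functor.map_comp]
      dsimp only [cc]
      simp only [Category.assoc]
      congr 2
      exact h1.symm

lemma pA_zero [HasExt.{w} A] (d : ℕ) (hgl : ∀ X Y : A, Subsingleton (Abelian.Ext X Y (d + 1)))
    {C : CochainComplex A ℤ} (D : AD C) : D.pA = 0 := by
  obtain ⟨X, α, h, T, m, c, hR, hc, e⟩ := S_lemma (d+1) D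
  have h0 := R_zero (d+1) α (fun i => (hgl _ _).elim _ _) h hR
  rw [h0, comp_zero] at e
  have e' : D.pA⟦((d+1:ℕ):ℤ)⟧' = 0 := by
    rw [← cancel_epi c, e, comp_zero]
  apply (shiftFunctor (DAbs A) ((d+1:ℕ):ℤ)).map_injective
  rw [e', Functor.map_zero]

/-- The standard data for an acyclic complex. -/
noncomputable def AD.std (C : CochainComplex A ℤ) (hac : ∀ n, C.ExactAt n) : AD C where
  V i := C.opcycles i
  ι i := C.fromOpcycles i (i+1)
  π i := C.pOpcycles i
  fac i := by simp
  zero i := by simp [← cancel_epi (C.pOpcycles i)]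
  se i := by
    have hm : Mono (C.fromOpcycles i (i+1)) := by
      exact Preadditive.mono_of_isZero_kernel' _ (C.homologyIsKernel i (i+1) (by simp))
        (hac i).isZero_homology
    have hz : C.fromOpcycles i (i+1) ≫ C.pOpcycles (i+1) = 0 := by simp [← cancel_epi (C.pOpcycles i)]
    refine { exact := ?_, mono_f := hm, epi_g := inferInstanceAs (Epi (C.pOpcycles (i+1))) }
    apply ShortComplex.exact_of_g_is_cokernel
    refine CokernelCofork.IsColimit.ofπ' _ _ (fun {Z} k hk => ⟨C.descOpcycles k i (by simp) ?_, ?_⟩)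
    · have h2 : C.fromOpcycles i (i+1) ≫ k = 0 := hk
      rw [← C.p_fromOpcycles, Category.assoc, h2, comp_zero]
    · exact C.p_descOpcycles _ _ _ _

/-- The kernel inclusion. -/
noncomputable def AD.j {C : CochainComplex A ℤ} (D : AD C) : zc (fun i => kernel (D.π i)) ⟶ C where
  f i := kernel.ι (D.π i)
  comm' i j hij := by
    obtain rfl : i + 1 = j := hij
    have : kernel.ι (D.π i) ≫ C.d i (i+1) = 0 := by
      rw [← D.fac, ← Category.assoc, kernel.condition, zero_comp]
    exact this.trans zero_comp.symm

lemma fac_std {C : CochainComplex A ℤ} (hac : ∀ n, C.ExactAt n) {V : ℤ → A} (f : C ⟶ zc V) :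
    ∃ t : ∀ i, C.opcycles i ⟶ V i, f = (AD.std C hac).p ≫ zmap t := by
  have hf (i : ℤ) : C.d (i-1) i ≫ f.f i = 0 := (f.comm (i-1) i).symm.trans comp_zero
  refine ⟨fun i => C.descOpcycles (f.f i) (i-1) (by simp) (hf i), ?_⟩
  apply HomologicalComplex.hom_ext
  intro i
  exact (C.p_descOpcycles (f.f i) (i-1) (by simp) (hf i)).symm

lemma hom_zero [HasExt.{w} A] (d : ℕ) (hgl : ∀ X Y : A, Subsingleton (Abelian.Ext X Y (d + 1)))
    {C : CochainComplex A ℤ} (hac : ∀ n, C.ExactAt n) {V : ℤ → A} (φ : LA.obj C ⟶ LA.obj (zc V)) :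
    φ = 0 := by
  obtain ⟨ψ, hψ⟩ := Localization.exists_rightFraction (LH (A := A)) (absP A).trW
    (X := (HomotopyCategory.quotient A (ComplexShape.up ℤ)).obj C)
    (Y := (HomotopyCategory.quotient A (ComplexShape.up ℤ)).obj (zc V)) φ
  obtain @⟨X', s, hs, f⟩ := ψ
  obtain ⟨K, rfl⟩ := HomotopyCategory.quotient_obj_surjective X'
  obtain ⟨f0, rfl⟩ := (HomotopyCategory.quotient A (ComplexShape.up ℤ)).map_surjective f
  have hK : ∀ n, K.ExactAt n := by
    rw [← HomotopyCategory.quotient_obj_mem_subcategoryAcyclic_iff_exactAt] at hac ⊢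
    obtain ⟨Z, g, h, hT, hZ⟩ := hs
    exact ObjectProperty.ext_of_isTriangulatedClosed₁ _ _ hT hac (absP_le _ hZ)
  obtain ⟨t, ht⟩ := fac_std hK f0
  have h0 : LA.map f0 = 0 := by
    rw [ht, Functor.map_comp]
    have := pA_zero d hgl (AD.std K hK)
    exact (congrArg (fun a => a ≫ LA.map (zmap t)) this).trans zero_comp
  have hiso : IsIso (LH.map s) := Localization.inverts (LH (A := A)) (absP A).trW s hs
  have h0' : LH.map ((HomotopyCategory.quotient A (ComplexShape.up ℤ)).map f0) = 0 := h0
  have h1 := MorphismProperty.RightFraction.map_s_comp_map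
    (MorphismProperty.RightFraction.mk s hs
      ((HomotopyCategory.quotient A (ComplexShape.up ℤ)).map f0)) LH
    (Localization.inverts (LH (A := A)) (absP A).trW)
  have h2 := h1.trans (h0'.trans (comp_zero (f := LH.map s)).symm)
  exact hψ.trans ((cancel_epi (LH.map s)).1 h2)

lemma main_aux [HasExt.{w} A] (d : ℕ) (hgl : ∀ X Y : A, Subsingleton (Abelian.Ext X Y (d + 1)))
    {C : CochainComplex A ℤ} (hac : ∀ n, C.ExactAt n) : IsZero (LA.obj C) := by
  let D := AD.std C hac
  have hz : D.j ≫ D.p = 0 := by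
    apply HomologicalComplex.hom_ext
    intro i
    exact kernel.condition (D.π i)
  have hS : (ShortComplex.mk D.j D.p hz).ShortExact := by
    apply HomologicalComplex.shortExact_of_degreewise_shortExact
    intro i
    exact { exact := ShortComplex.exact_kernel (D.π i)
            mono_f := inferInstanceAs (Mono (kernel.ι (D.π i)))
            epi_g := inferInstanceAs (Epi (C.pOpcycles i)) }
  have hT := dl_dist hS
  rw [IsZero.iff_id_eq_zero]
  obtain ⟨t, ht⟩ := Triangle.coyoneda_exact₂ _ hT (𝟙 (LA.obj C)) (hom_zero d hgl hac _)
  have ht0 : t = 0 := hom_zero d hgl hac t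
  rw [ht, ht0]
  exact zero_comp

end Final

/-- In an abelian category of finite global dimension (i.e. `Ext^{d+1}`
vanishes identically for some `d`), every acyclic cochain complex is absolutely
acyclic. -/
theorem stmt_11 [HasExt.{w} A] (d : ℕ)
    (hgl : ∀ X Y : A, Subsingleton (Abelian.Ext X Y (d + 1)))
    (C : CochainComplex A ℤ) (hac : ∀ n, C.ExactAt n) :
    IsAbsolutelyAcyclic ((HomotopyCategory.quotient A (ComplexShape.up ℤ)).obj C) :=
  absP_of_isZero _ (main_aux d hgl hac)
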